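/- arXiv:1712.00320 — 2 statements merged into one kernel-verified Lean document; each statement's English description precedes it below -/
import Mathlib

section
/- Let Ω ⊂ ℝⁿ be open, bounded, with C^{1,1} boundary, s ∈ (0,1), and β : ℝⁿ \ Ω → [0,1] measurable. Let N = supp(1−β) and define k_β as in the context. Then for every fixed x ∈ Ω there exists C = C(x) > 0 such that k_β(x,y) ≤ C·(1 + |ln dist(y, N)|) for all y ∈ Ω. In particular k_β(x,·) is finite on Ω. -/
open MeasureTheory Metric Set

/-- A bounded open set with `C^{1,1}` boundary: we encode the analytically relevant
consequence, namely the uniform interior and exterior sphere conditions. -/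
def HasC11Boundary {n : ℕ} (Ω : Set (EuclideanSpace ℝ (Fin n))) : Prop :=
  ∃ r > 0, ∀ p ∈ frontier Ω,
    (∃ x ∈ Ω, Metric.closedBall x r ⊆ closure Ω ∧ dist p x = r) ∧
    (∃ y ∈ (closure Ω)ᶜ, Metric.closedBall y r ⊆ Ωᶜ ∧ dist p y = r)

/-- The kernel k_β(x,y). -/
noncomputable def kBeta {n : ℕ} (s : ℝ) (Ω : Set (EuclideanSpace ℝ (Fin n)))
    (β : EuclideanSpace ℝ (Fin n) → ℝ) (x y : EuclideanSpace ℝ (Fin n)) : ℝ :=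
  ∫ z in Ωᶜ, (1 - β z) /
    (‖x - z‖ ^ ((n : ℝ) + 2*s) * ‖y - z‖ ^ ((n : ℝ) + 2*s) *
      ∫ w in Ω, ‖z - w‖ ^ (-((n : ℝ) + 2*s)))

/-!
For `z ∉ Ω` and `y ∈ Ω`, a boundary point of `Ω` nearest to `y` is within `2‖y - z‖` of `z`. The
regularity of the boundary provides next to it a ball inside `Ω` of radius comparable to
`t = min ‖y - z‖ r`, whose points are at distance `≲ ‖y - z‖` from `z`, so that
`∫_Ω ‖z - w‖ ^ (-q) dw ≳ ‖y - z‖ ^ (-q) t ^ n`. The singular factor `‖y - z‖ ^ (-q)` cancels and the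
integrand of `k_β(x, y)` is at most a multiple of `‖x - z‖ ^ (-q) t ^ (-n)`. Far from `y` this is
`‖x - z‖ ^ (-q)`, integrable off a neighbourhood of `x`; near `y` it is `‖y - z‖ ^ (-n)`, which is
only integrated over `dist(y, N) ≤ ‖y - z‖ ≤ r` because the integrand vanishes outside `N`, and
polar coordinates give the logarithm.
-/

open Module

section InteriorCorkscrews

/-- The interior corkscrew condition: at every boundary point and every scale `t ≤ r` the set `Ω`
contains a ball of radius comparable to `t` whose centre is at distance at most `t`. It holds for
Lipschitz domains, and a ball of radius `r` touching from inside gives it with `κ = 1`. -/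
def HasInteriorCorkscrews {X : Type*} [PseudoMetricSpace X] (Ω : Set X) (κ r : ℝ) : Prop :=
  ∀ p ∈ frontier Ω, ∀ t ∈ Ioc 0 r, ∃ c, ball c (κ * t) ⊆ Ω ∧ dist p c ≤ t

theorem HasC11Boundary.interior_closure_subset {n : ℕ} {Ω : Set (EuclideanSpace ℝ (Fin n))}
    (hΩc : HasC11Boundary Ω) (hΩo : IsOpen Ω) : interior (closure Ω) ⊆ Ω := by
  obtain ⟨r, hr, hsphere⟩ := hΩc
  intro p hp
  by_contra hpΩ
  obtain ⟨-, q, -, hq, hpq⟩ :=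
    hsphere p (hΩo.frontier_eq ▸ ⟨interior_subset hp, hpΩ⟩)
  have hdisj : Disjoint (ball q r) (closure Ω) :=
    (disjoint_left.2 fun w hw ↦ hq (ball_subset_closedBall hw)).closure_right isOpen_ball
  have hpcl : p ∈ closure (ball q r) := by
    rw [closure_ball q hr.ne', mem_closedBall]
    exact hpq.le
  obtain ⟨w, hwcl, hwball⟩ := mem_closure_iff.1 hpcl _ isOpen_interior hp
  exact disjoint_left.1 hdisj hwball (interior_subset hwcl)

theorem HasC11Boundary.exists_hasInteriorCorkscrews {n : ℕ} {Ω : Set (EuclideanSpace ℝ (Fin n))}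
    (hΩc : HasC11Boundary Ω) (hΩo : IsOpen Ω) : ∃ r > 0, HasInteriorCorkscrews Ω 1 r := by
  have hint := hΩc.interior_closure_subset hΩo
  obtain ⟨r, hr, hsphere⟩ := hΩc
  refine ⟨r, hr, fun p hp t ht ↦ ?_⟩
  obtain ⟨⟨x, -, hx, hpx⟩, -⟩ := hsphere p hp
  have hball : ball x r ⊆ Ω :=
    (interior_maximal (ball_subset_closedBall.trans hx) isOpen_ball).trans hint
  have htr : t / r ≤ 1 := (div_le_one hr).2 ht.2
  have htr0 : 0 ≤ t / r := div_nonneg ht.1.le hr.le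
  refine ⟨AffineMap.lineMap p x (t / r), (ball_subset_ball' ?_).trans hball, ?_⟩
  · rw [dist_lineMap_right, hpx, Real.norm_of_nonneg (sub_nonneg.2 htr), sub_mul,
      div_mul_cancel₀ _ hr.ne']
    linarith
  · rw [dist_left_lineMap, hpx, Real.norm_of_nonneg htr0, div_mul_cancel₀ _ hr.ne']

theorem HasInteriorCorkscrews.exists_ball_subset {E : Type*} [NormedAddCommGroup E]
    [NormedSpace ℝ E] [FiniteDimensional ℝ E] {Ω : Set E} {κ r t : ℝ} {y z : E}
    (hΩ : HasInteriorCorkscrews Ω κ r) (hκ : 0 ≤ κ) (hy : y ∈ Ω) (hz : z ∉ Ω) (ht : t ∈ Ioc 0 r)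
    (htyz : t ≤ ‖y - z‖) :
    ∃ c, ball c (κ * t) ⊆ Ω ∧ ∀ w ∈ ball c (κ * t), ‖z - w‖ ≤ (3 + κ) * ‖y - z‖ := by
  obtain ⟨p, hp, hyp⟩ :=
    exists_mem_frontier_infDist_compl_eq_dist hy (ne_univ_iff_exists_notMem Ω |>.2 ⟨z, hz⟩)
  obtain ⟨c, hcΩ, hpc⟩ := hΩ p hp t ht
  refine ⟨c, hcΩ, fun w hw ↦ ?_⟩
  rw [← dist_eq_norm] at htyz ⊢
  rw [← dist_eq_norm]
  have hyp' : dist y p ≤ dist y z := hyp ▸ infDist_le_dist_of_mem hz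
  have hcw : dist c w ≤ κ * dist y z :=
    (mem_ball'.1 hw).le.trans (mul_le_mul_of_nonneg_left htyz hκ)
  calc dist z w ≤ dist z y + dist y p + dist p c + dist c w :=
        (dist_triangle4 z p c w).trans <| by gcongr; exact dist_triangle z y p
    _ ≤ (3 + κ) * dist y z := by rw [dist_comm z y]; linarith

end InteriorCorkscrews

section AnnulusKernel

variable {E : Type*} [NormedAddCommGroup E] [NormedSpace ℝ E]

/-- The critical power `‖w‖ ^ (-dim E)` cut off to the annulus `ρ ≤ ‖w‖ ≤ r`. Its integral is the
source of the logarithm in the kernel bound. -/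
noncomputable def annulusKernel (ρ r : ℝ) : E → ℝ :=
  ((‖·‖) ⁻¹' Icc ρ r).indicator fun w ↦ (‖w‖ ^ finrank ℝ E)⁻¹

theorem annulusKernel_nonneg (ρ r : ℝ) (w : E) : 0 ≤ annulusKernel ρ r w :=
  indicator_nonneg (fun _ _ ↦ by positivity) w

theorem inv_min_norm_pow_finrank_le {ρ r : ℝ} (hr : 0 ≤ r) {w : E} (hρ : ρ ≤ ‖w‖) :
    (min ‖w‖ r ^ finrank ℝ E)⁻¹ ≤ (r ^ finrank ℝ E)⁻¹ + annulusKernel ρ r w := by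
  rcases le_or_gt ‖w‖ r with hwr | hrw
  · have hw : annulusKernel ρ r w = (‖w‖ ^ finrank ℝ E)⁻¹ :=
      indicator_of_mem (show w ∈ (‖·‖) ⁻¹' Icc ρ r from ⟨hρ, hwr⟩) _
    rw [min_eq_left hwr, hw]
    exact le_add_of_nonneg_left (by positivity)
  · rw [min_eq_right hrw.le]
    exact le_add_of_nonneg_right (annulusKernel_nonneg ρ r w)

variable [MeasurableSpace E] [BorelSpace E] [FiniteDimensional ℝ E] (μ : Measure E)

theorem integrable_annulusKernel [IsFiniteMeasureOnCompacts μ] {ρ : ℝ} (hρ : 0 < ρ) (r : ℝ) :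
    Integrable (annulusKernel ρ r : E → ℝ) μ := by
  have hclosed : IsClosed ((‖·‖) ⁻¹' Icc ρ r : Set E) := isClosed_Icc.preimage continuous_norm
  have hcompact : IsCompact ((‖·‖) ⁻¹' Icc ρ r : Set E) :=
    (isCompact_closedBall 0 r).of_isClosed_subset hclosed fun w hw ↦ by simpa using hw.2
  refine (ContinuousOn.integrableOn_compact hcompact ?_).integrable_indicator hclosed.measurableSet
  exact (by fun_prop : Continuous fun w : E ↦ ‖w‖ ^ finrank ℝ E).continuousOn.inv₀
    fun w hw ↦ (pow_pos (hρ.trans_le hw.1) _).ne'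

variable [μ.IsAddHaarMeasure]

theorem integral_annulusKernel {ρ r : ℝ} (hρ : 0 < ρ) (hρr : ρ ≤ r) :
    ∫ w, annulusKernel ρ r w ∂μ =
      finrank ℝ E * (μ.real (ball 0 1) * Real.log (r / ρ)) := by
  rcases subsingleton_or_nontrivial E with hE | hE
  · have hzero : ∀ w : E, annulusKernel ρ r w = 0 := fun w ↦
      indicator_of_notMem (fun hw ↦ hρ.not_ge (by simpa [Subsingleton.elim w 0] using hw.1)) _
    simp [hzero, finrank_zero_of_subsingleton]
  have hradial : ∀ a : ℝ, a ^ (finrank ℝ E - 1) •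
      (Icc ρ r).indicator (fun a ↦ (a ^ finrank ℝ E)⁻¹) a = (Icc ρ r).indicator (·⁻¹) a := by
    intro a
    by_cases ha : a ∈ Icc ρ r
    · have ha0 : a ≠ 0 := (hρ.trans_le ha.1).ne'
      rw [indicator_of_mem ha, indicator_of_mem ha, smul_eq_mul,
        ← pow_sub_one_mul finrank_pos.ne' a]
      field_simp
    · rw [indicator_of_notMem ha, indicator_of_notMem ha, smul_zero]
  calc ∫ w, annulusKernel ρ r w ∂μ
      = finrank ℝ E • μ.real (ball 0 1) • ∫ a in Ioi 0, (Icc ρ r).indicator (·⁻¹) a := by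
        simp only [← hradial]
        exact integral_fun_norm_addHaar μ ((Icc ρ r).indicator fun a ↦ (a ^ finrank ℝ E)⁻¹)
    _ = finrank ℝ E • μ.real (ball 0 1) • ∫ a in ρ..r, a⁻¹ := by
        rw [setIntegral_indicator measurableSet_Icc,
          inter_eq_self_of_subset_right fun a ha ↦ mem_Ioi.2 (hρ.trans_le ha.1),
          integral_Icc_eq_integral_Ioc, intervalIntegral.integral_of_le hρr]
    _ = finrank ℝ E * (μ.real (ball 0 1) * Real.log (r / ρ)) := by
        rw [integral_inv_of_pos hρ (hρ.trans_le hρr), nsmul_eq_mul, smul_eq_mul]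

theorem integral_annulusKernel_le {ρ r : ℝ} (hρ : 0 < ρ) (hr : 0 < r) :
    ∫ w, annulusKernel ρ r w ∂μ ≤
      finrank ℝ E * (μ.real (ball 0 1) * (|Real.log r| + |Real.log ρ|)) := by
  rcases le_or_gt ρ r with hρr | hrρ
  · rw [integral_annulusKernel μ hρ hρr, Real.log_div hr.ne' hρ.ne']
    gcongr
    exact (le_abs_self _).trans (abs_sub _ _)
  · have hzero : ∀ w : E, annulusKernel ρ r w = 0 := fun w ↦ by
      simp [annulusKernel, Icc_eq_empty hrρ.not_ge]
    simp only [hzero, integral_zero]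
    positivity

end AnnulusKernel

section Kernel

variable {E : Type*} [NormedAddCommGroup E] [MeasurableSpace E] (μ : Measure E)
  {Ω : Set E} {β : E → ℝ} {q κ r δ ρ : ℝ} {x y z : E}

/-- The integrand in the kernel `k_β`, for an arbitrary measure `μ` in place of Lebesgue measure
and an arbitrary exponent `q` in place of `n + 2s`. -/
noncomputable def kBetaIntegrand (q : ℝ) (Ω : Set E) (β : E → ℝ) (x y z : E) : ℝ :=
  (1 - β z) / (‖x - z‖ ^ q * ‖y - z‖ ^ q * ∫ w in Ω, ‖z - w‖ ^ (-q) ∂μ)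

theorem kBetaIntegrand_nonneg (hβ : β z ≤ 1) : 0 ≤ kBetaIntegrand μ q Ω β x y z :=
  div_nonneg (sub_nonneg.2 hβ) (by positivity)

variable [BorelSpace E]

theorem aestronglyMeasurable_kBetaIntegrand [SecondCountableTopology E] [SFinite μ]
    {ν : Measure E} (hβ : AEMeasurable β ν) :
    AEStronglyMeasurable (kBetaIntegrand μ q Ω β x y) ν := by
  have hint : StronglyMeasurable fun z ↦ ∫ w in Ω, ‖z - w‖ ^ (-q) ∂μ :=
    StronglyMeasurable.integral_prod_right (Measurable.stronglyMeasurable (by fun_prop))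
  have hmeas := hint.measurable
  exact AEMeasurable.aestronglyMeasurable (by unfold kBetaIntegrand; fun_prop)

variable [NormedSpace ℝ E] [FiniteDimensional ℝ E] [μ.IsAddHaarMeasure]

theorem addHaar_real_ball_of_pos (x : E) {r : ℝ} (hr : 0 < r) :
    μ.real (ball x r) = r ^ finrank ℝ E * μ.real (ball 0 1) := by
  rw [measureReal_def, Measure.addHaar_ball_of_pos μ x hr, ENNReal.toReal_mul,
    ENNReal.toReal_ofReal (by positivity), measureReal_def]

theorem integrableOn_norm_sub_rpow_neg_compl_ball (x : E) {q δ : ℝ} (hq : finrank ℝ E < q)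
    (hδ : 0 < δ) : IntegrableOn (fun z ↦ ‖x - z‖ ^ (-q)) (ball x δ)ᶜ μ := by
  have hmaj : Integrable (fun z ↦ (1 + δ⁻¹) ^ q * (1 + ‖x - z‖) ^ (-q)) μ :=
    ((integrable_one_add_norm hq).comp_sub_left x).const_mul _
  refine hmaj.integrableOn.mono' (Measurable.aestronglyMeasurable (by fun_prop)) <|
    (ae_restrict_iff' measurableSet_ball.compl).2 <| .of_forall fun z hz ↦ ?_
  have hδz : δ ≤ ‖x - z‖ := by simpa [dist_eq_norm'] using hz
  have hz0 : 0 < ‖x - z‖ := hδ.trans_le hδz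
  have hle : 1 + ‖x - z‖ ≤ (1 + δ⁻¹) * ‖x - z‖ := by
    have : 1 ≤ δ⁻¹ * ‖x - z‖ := by rwa [inv_mul_eq_div, one_le_div hδ]
    linarith
  have hq0 : -q ≤ 0 := neg_nonpos.2 ((Nat.cast_nonneg _).trans hq.le)
  calc ‖‖x - z‖ ^ (-q)‖ = (1 + δ⁻¹) ^ q * ((1 + δ⁻¹) * ‖x - z‖) ^ (-q) := by
        rw [Real.norm_of_nonneg (by positivity), Real.mul_rpow (by positivity) hz0.le, ← mul_assoc,
          ← Real.rpow_add (by positivity), add_neg_cancel, Real.rpow_zero, one_mul]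
    _ ≤ (1 + δ⁻¹) ^ q * (1 + ‖x - z‖) ^ (-q) := by
        gcongr (1 + δ⁻¹) ^ q * ?_
        exact Real.rpow_le_rpow_of_nonpos (by positivity) hle hq0

-- Where the integral diverges, the conventions `∫ = 0` and `0⁻¹ = 0` give the intended `∞⁻¹ = 0`.
theorem inv_setIntegral_norm_sub_rpow_neg_le {c : E} {t R : ℝ} (hq : 0 ≤ q) (ht : 0 < t)
    (hz : z ∉ Ω) (hc : ball c t ⊆ Ω) (hR : ∀ w ∈ ball c t, ‖z - w‖ ≤ R) :
    (∫ w in Ω, ‖z - w‖ ^ (-q) ∂μ)⁻¹ ≤ R ^ q / μ.real (ball c t) := by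
  have hpos : ∀ w ∈ ball c t, 0 < ‖z - w‖ := fun w hw ↦
    norm_sub_pos_iff.2 fun hzw ↦ hz (hzw ▸ hc hw)
  have hR0 : 0 < R := (hpos c (mem_ball_self ht)).trans_le (hR c (mem_ball_self ht))
  by_cases hint : IntegrableOn (fun w ↦ ‖z - w‖ ^ (-q)) Ω μ
  swap
  · rw [integral_undef hint, inv_zero]
    positivity
  have hV : 0 < μ.real (ball c t) :=
    ENNReal.toReal_pos (measure_ball_pos μ c ht).ne' measure_ball_lt_top.ne
  have hlower : R ^ (-q) * μ.real (ball c t) ≤ ∫ w in Ω, ‖z - w‖ ^ (-q) ∂μ :=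
    calc R ^ (-q) * μ.real (ball c t) ≤ ∫ w in ball c t, ‖z - w‖ ^ (-q) ∂μ :=
          setIntegral_ge_of_const_le_real measurableSet_ball measure_ball_lt_top.ne
            (fun w hw ↦
              Real.rpow_le_rpow_of_nonpos (hpos w hw) (hR w hw) (neg_nonpos.2 hq))
            (hint.mono_set hc)
      _ ≤ ∫ w in Ω, ‖z - w‖ ^ (-q) ∂μ :=
          setIntegral_mono_set hint (.of_forall fun w ↦ by positivity) hc.eventuallyLE
  calc (∫ w in Ω, ‖z - w‖ ^ (-q) ∂μ)⁻¹ ≤ (R ^ (-q) * μ.real (ball c t))⁻¹ :=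
        inv_anti₀ (by positivity) hlower
    _ = R ^ q / μ.real (ball c t) := by
        rw [Real.rpow_neg hR0.le, mul_inv, inv_inv, div_eq_mul_inv]

theorem kBetaIntegrand_le_min (hΩ : HasInteriorCorkscrews Ω κ r) (hκ : 0 < κ) (hr : 0 < r)
    (hq : 0 ≤ q) (hβ : β z ∈ Icc 0 1) (hy : y ∈ Ω) (hz : z ∉ Ω) :
    kBetaIntegrand μ q Ω β x y z ≤ (3 + κ) ^ q / (κ ^ finrank ℝ E * μ.real (ball 0 1)) *
      (‖x - z‖ ^ (-q) * (min ‖y - z‖ r ^ finrank ℝ E)⁻¹) := by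
  have hyz : 0 < ‖y - z‖ := norm_sub_pos_iff.2 fun h ↦ hz (h ▸ hy)
  have ht : 0 < min ‖y - z‖ r := lt_min hyz hr
  obtain ⟨c, hcΩ, hc⟩ :=
    hΩ.exists_ball_subset hκ.le hy hz ⟨ht, min_le_right _ _⟩ (min_le_left _ _)
  have hinv := inv_setIntegral_norm_sub_rpow_neg_le μ hq (mul_pos hκ ht) hz hcΩ hc
  rw [addHaar_real_ball_of_pos μ c (mul_pos hκ ht), mul_pow,
    Real.mul_rpow (by positivity) hyz.le] at hinv
  calc kBetaIntegrand μ q Ω β x y z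
      = (1 - β z) *
          (‖x - z‖ ^ (-q) * (‖y - z‖ ^ q)⁻¹ * (∫ w in Ω, ‖z - w‖ ^ (-q) ∂μ)⁻¹) := by
        rw [kBetaIntegrand, div_eq_mul_inv, mul_inv, mul_inv, Real.rpow_neg (norm_nonneg _)]
    _ ≤ 1 * (‖x - z‖ ^ (-q) * (‖y - z‖ ^ q)⁻¹ * ((3 + κ) ^ q * ‖y - z‖ ^ q /
          (κ ^ finrank ℝ E * min ‖y - z‖ r ^ finrank ℝ E * μ.real (ball 0 1)))) := by
        gcongr
        linarith [hβ.1]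
    _ = _ := by
        have := Real.rpow_pos_of_pos hyz q
        field_simp

theorem kBetaIntegrand_le (hΩ : HasInteriorCorkscrews Ω κ r) (hκ : 0 < κ) (hr : 0 < r)
    (hq : 0 ≤ q) (hβ : β z ∈ Icc 0 1) (hy : y ∈ Ω) (hz : z ∉ Ω) (hδ : 0 < δ)
    (hxz : δ ≤ ‖x - z‖) (hρ : β z ≠ 1 → ρ ≤ ‖y - z‖) :
    kBetaIntegrand μ q Ω β x y z ≤ (3 + κ) ^ q / (κ ^ finrank ℝ E * μ.real (ball 0 1)) *
      ((r ^ finrank ℝ E)⁻¹ * ‖x - z‖ ^ (-q) + δ ^ (-q) * annulusKernel ρ r (y - z)) := by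
  have hann := annulusKernel_nonneg ρ r (y - z)
  by_cases hβ1 : β z = 1
  · rw [kBetaIntegrand, hβ1, sub_self, zero_div]
    positivity
  have hδq : ‖x - z‖ ^ (-q) ≤ δ ^ (-q) := Real.rpow_le_rpow_of_nonpos hδ hxz (neg_nonpos.2 hq)
  refine (kBetaIntegrand_le_min μ hΩ hκ hr hq hβ hy hz).trans ?_
  gcongr
  calc ‖x - z‖ ^ (-q) * (min ‖y - z‖ r ^ finrank ℝ E)⁻¹
      ≤ ‖x - z‖ ^ (-q) * ((r ^ finrank ℝ E)⁻¹ + annulusKernel ρ r (y - z)) := by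
        gcongr
        exact inv_min_norm_pow_finrank_le hr.le (hρ hβ1)
    _ ≤ (r ^ finrank ℝ E)⁻¹ * ‖x - z‖ ^ (-q) + δ ^ (-q) * annulusKernel ρ r (y - z) := by
        rw [mul_add, mul_comm]
        gcongr

theorem integrableOn_kBetaIntegrand_and_setIntegral_le (hΩ : HasInteriorCorkscrews Ω κ r)
    (hκ : 0 < κ) (hr : 0 < r) (hq : finrank ℝ E < q) (hΩm : MeasurableSet Ω)
    (hβm : AEMeasurable β (μ.restrict Ωᶜ)) (hβ : ∀ z ∈ Ωᶜ, β z ∈ Icc 0 1) (hδ : 0 < δ)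
    (hx : ball x δ ⊆ Ω) (hy : y ∈ Ω) (hρ : 0 < ρ) (hρβ : ∀ z ∈ Ωᶜ, β z ≠ 1 → ρ ≤ ‖y - z‖) :
    IntegrableOn (kBetaIntegrand μ q Ω β x y) Ωᶜ μ ∧
      ∫ z in Ωᶜ, kBetaIntegrand μ q Ω β x y z ∂μ ≤
        (3 + κ) ^ q / (κ ^ finrank ℝ E * μ.real (ball 0 1)) *
          ((r ^ finrank ℝ E)⁻¹ * ∫ z in Ωᶜ, ‖x - z‖ ^ (-q) ∂μ +
            δ ^ (-q) * (finrank ℝ E * (μ.real (ball 0 1) * (|Real.log r| + |Real.log ρ|)))) := by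
  have hq0 : 0 ≤ q := (Nat.cast_nonneg _).trans hq.le
  have hfar : IntegrableOn (fun z ↦ ‖x - z‖ ^ (-q)) Ωᶜ μ :=
    (integrableOn_norm_sub_rpow_neg_compl_ball μ x hq hδ).mono_set (compl_subset_compl.2 hx)
  have hann : Integrable (fun z ↦ annulusKernel ρ r (y - z)) μ :=
    (integrable_annulusKernel μ hρ r).comp_sub_left y
  have hle : ∀ z ∈ Ωᶜ, kBetaIntegrand μ q Ω β x y z ≤ _ := fun z hz ↦
    kBetaIntegrand_le μ hΩ hκ hr hq0 (hβ z hz) hy hz hδ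
      (by simpa [dist_eq_norm'] using fun h ↦ hz (hx h)) (hρβ z hz)
  have hmaj : IntegrableOn (fun z ↦ (3 + κ) ^ q / (κ ^ finrank ℝ E * μ.real (ball 0 1)) *
      ((r ^ finrank ℝ E)⁻¹ * ‖x - z‖ ^ (-q) + δ ^ (-q) * annulusKernel ρ r (y - z))) Ωᶜ μ :=
    ((hfar.const_mul (r ^ finrank ℝ E)⁻¹).add
      (hann.integrableOn.const_mul (δ ^ (-q)))).const_mul _
  have hint : IntegrableOn (kBetaIntegrand μ q Ω β x y) Ωᶜ μ := by
    refine hmaj.mono' (aestronglyMeasurable_kBetaIntegrand μ hβm) <|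
      (ae_restrict_iff' hΩm.compl).2 <| .of_forall fun z hz ↦ ?_
    rw [Real.norm_of_nonneg (kBetaIntegrand_nonneg μ (hβ z hz).2)]
    exact hle z hz
  refine ⟨hint, (setIntegral_mono_on hint hmaj hΩm.compl hle).trans ?_⟩
  rw [integral_const_mul, integral_add (hfar.const_mul _) (hann.integrableOn.const_mul _),
    integral_const_mul, integral_const_mul]
  gcongr
  calc ∫ z in Ωᶜ, annulusKernel ρ r (y - z) ∂μ ≤ ∫ z, annulusKernel ρ r (y - z) ∂μ :=
        setIntegral_le_integral hann (.of_forall fun z ↦ annulusKernel_nonneg ρ r (y - z))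
    _ = ∫ w, annulusKernel ρ r w ∂μ := integral_sub_left_eq_self _ μ y
    _ ≤ _ := integral_annulusKernel_le μ hρ hr

theorem exists_setIntegral_kBetaIntegrand_le (hΩo : IsOpen Ω) (hΩ : HasInteriorCorkscrews Ω κ r)
    (hκ : 0 < κ) (hr : 0 < r) (hq : finrank ℝ E < q) (hβm : AEMeasurable β (μ.restrict Ωᶜ))
    (hβ : ∀ z ∈ Ωᶜ, β z ∈ Icc 0 1) (hx : x ∈ Ω) :
    ∃ C > 0, ∀ y ∈ Ω, ∀ ρ > 0, (∀ z ∈ Ωᶜ, β z ≠ 1 → ρ ≤ ‖y - z‖) →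
      IntegrableOn (kBetaIntegrand μ q Ω β x y) Ωᶜ μ ∧
        ∫ z in Ωᶜ, kBetaIntegrand μ q Ω β x y z ∂μ ≤ C * (1 + |Real.log ρ|) := by
  obtain ⟨δ, hδ, hxδ⟩ := isOpen_iff.1 hΩo x hx
  set K := (3 + κ) ^ q / (κ ^ finrank ℝ E * μ.real (ball 0 1))
  set a := (r ^ finrank ℝ E)⁻¹ * ∫ z in Ωᶜ, ‖x - z‖ ^ (-q) ∂μ
  set b := δ ^ (-q) * (finrank ℝ E * μ.real (ball 0 1))
  have : 0 ≤ K := by positivity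
  have : 0 ≤ a := mul_nonneg (by positivity) (integral_nonneg fun _ ↦ by positivity)
  have : 0 ≤ b := by positivity
  refine ⟨K * (a + b * (|Real.log r| + 1)) + 1, by positivity, fun y hy ρ hρ hρβ ↦ ?_⟩
  obtain ⟨hint, hle⟩ := integrableOn_kBetaIntegrand_and_setIntegral_le μ hΩ hκ hr hq
    hΩo.measurableSet hβm hβ hδ hxδ hy hρ hρβ
  refine ⟨hint, hle.trans ?_⟩
  have hslack : 0 ≤ (K * (a + b * |Real.log r|) + 1) * |Real.log ρ| + K * b + 1 := by positivity
  calc K * (a + δ ^ (-q) *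
          (finrank ℝ E * (μ.real (ball 0 1) * (|Real.log r| + |Real.log ρ|))))
      = K * (a + b * (|Real.log r| + |Real.log ρ|)) := by ring
    _ ≤ (K * (a + b * (|Real.log r| + 1)) + 1) * (1 + |Real.log ρ|) := by linarith

end Kernel

theorem stmt7_general {E : Type*} [NormedAddCommGroup E] [NormedSpace ℝ E] [MeasurableSpace E]
    [BorelSpace E] [FiniteDimensional ℝ E] (μ : Measure E) [μ.IsAddHaarMeasure] {Ω : Set E}
    (hΩo : IsOpen Ω) {κ r : ℝ} (hκ : 0 < κ) (hr : 0 < r) (hΩ : HasInteriorCorkscrews Ω κ r)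
    {q : ℝ} (hq : finrank ℝ E < q) {β : E → ℝ} (hβm : AEMeasurable β (μ.restrict Ωᶜ))
    (hβ : ∀ z ∈ Ωᶜ, β z ∈ Icc 0 1) :
    ∀ x ∈ Ω, ∃ C > 0, ∀ y ∈ Ω,
      IntegrableOn (kBetaIntegrand μ q Ω β x y) Ωᶜ μ ∧
        ∫ z in Ωᶜ, kBetaIntegrand μ q Ω β x y z ∂μ ≤
          C * (1 + |Real.log (infDist y (closure {z | z ∈ Ωᶜ ∧ β z ≠ 1}))|) := by
  intro x hx
  obtain ⟨C, hC, hbound⟩ := exists_setIntegral_kBetaIntegrand_le μ hΩo hΩ hκ hr hq hβm hβ hx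
  refine ⟨C, hC, fun y hy ↦ ?_⟩
  set N := {z | z ∈ Ωᶜ ∧ β z ≠ 1}
  rw [infDist_closure]
  rcases N.eq_empty_or_nonempty with hN | hN
  -- `infDist y ∅ = 0` and `log 0 = 0 = log 1`, so the scale `ρ = 1` gives the bound.
  · simpa [hN] using hbound y hy 1 one_pos fun z hz hzβ ↦ (hN.le ⟨hz, hzβ⟩).elim
  · have hyN : y ∉ closure N := fun hcl ↦
      closure_minimal (fun _ hz ↦ hz.1) hΩo.isClosed_compl hcl hy
    refine hbound y hy _ ((infDist_pos_iff_notMem_closure hN).1 hyN) fun z hz hzβ ↦ ?_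
    rw [← dist_eq_norm]
    exact infDist_le_dist_of_mem ⟨hz, hzβ⟩

/-- Lemma 2.2: with N = supp(1−β) = closure {z ∈ ℝⁿ\Ω : β z ≠ 1},
for every x ∈ Ω there is C = C(x) > 0 with
k_β(x,y) ≤ C·(1 + |ln dist(y, N)|) for all y ∈ Ω. -/
theorem stmt7 {n : ℕ} (Ω : Set (EuclideanSpace ℝ (Fin n)))
    (hΩo : IsOpen Ω) (hΩb : Bornology.IsBounded Ω) (hΩc : HasC11Boundary Ω)
    (s : ℝ) (hs : s ∈ Set.Ioo (0:ℝ) 1)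
    (β : EuclideanSpace ℝ (Fin n) → ℝ) (hβm : Measurable β)
    (hβ01 : ∀ z ∈ Ωᶜ, β z ∈ Set.Icc (0:ℝ) 1) :
    ∀ x ∈ Ω, ∃ C > 0, ∀ y ∈ Ω,
      kBeta s Ω β x y ≤
        C * (1 + |Real.log (Metric.infDist y (closure {z | z ∈ Ωᶜ ∧ β z ≠ 1}))|) := by
  intro x hx
  obtain ⟨r, hr, hcork⟩ := hΩc.exists_hasInteriorCorkscrews hΩo
  obtain ⟨C, hC, hbound⟩ := stmt7_general volume hΩo one_pos hr hcork
    (q := n + 2 * s) (by simpa using hs.1) hβm.aemeasurable hβ01 x hx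
  exact ⟨C, hC, fun y hy ↦ (hbound y hy).2⟩
end

section
/- Let Ω ⊂ ℝⁿ be open, bounded, with C^{1,1} boundary, s ∈ (0,1), α > 0, and let u ∈ C^{2s+α}_loc(Ω) ∩ L^∞(ℝⁿ) satisfy the nonlocal Robin condition β(x)u(x) + (1−β(x))·Ñ_s u(x) = 0 for a.e. x ∈ ℝⁿ\Ω, where β : ℝⁿ → [0,1] is measurable with β = 0 in Ω. Then for every x ∈ Ω, (−Δ)^s u(x) = (−Δ)^s_Ω u(x) − u(x)·(−Δ)^s β(x) + c_{n,s} ∫_Ω (u(x)−u(y)) k_β(x,y) dy. -/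
open MeasureTheory Metric Set Filter

/-- `u ∈ C^γ_loc(Ω)`: near every point of Ω, u is γ-Hölder if γ ≤ 1, and
differentiable with (γ−1)-Hölder derivative if γ > 1 (here 0 < γ ≤ 2). -/
def HolderLoc {n : ℕ} (γ : ℝ) (Ω : Set (EuclideanSpace ℝ (Fin n)))
    (u : EuclideanSpace ℝ (Fin n) → ℝ) : Prop :=
  ∀ x ∈ Ω, ∃ ε > 0, Metric.ball x ε ⊆ Ω ∧
    ((γ ≤ 1 → ∃ C : NNReal, HolderOnWith C γ.toNNReal u (Metric.ball x ε)) ∧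
     (1 < γ → ∃ (C : NNReal) (du : EuclideanSpace ℝ (Fin n) →
          (EuclideanSpace ℝ (Fin n) →L[ℝ] ℝ)),
        (∀ y ∈ Metric.ball x ε, HasFDerivAt u (du y) y) ∧
        HolderOnWith C (γ - 1).toNNReal du (Metric.ball x ε)))

/-- The normalized nonlocal normal derivative Ñ_s u(x), for x ∈ ℝⁿ\Ω. -/
noncomputable def NNder {n : ℕ} (s : ℝ) (Ω : Set (EuclideanSpace ℝ (Fin n)))
    (u : EuclideanSpace ℝ (Fin n) → ℝ) (x : EuclideanSpace ℝ (Fin n)) : ℝ :=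
  (∫ y in Ω, ‖x - y‖ ^ (-((n : ℝ) + 2*s)))⁻¹ *
    ∫ y in Ω, (u x - u y) * ‖x - y‖ ^ (-((n : ℝ) + 2*s))

/-!
Outside `Ω` the Robin condition says that `u z` is `1 - β z` times the average of `u` over `Ω`
with weight `‖z - y‖ ^ (-(n + 2s))`. Equivalently, for a fixed `x ∈ Ω`, the difference `u x - u z`
is `u x * β z` plus `1 - β z` times the same average of `u x - u`. Integrating this identity against
`‖x - z‖ ^ (-(n + 2s))` over `Ωᶜ`, which is exactly what the fractional Laplacian adds to the
regional one, and exchanging the two integrals produces the `(-Δ)^s β` term and the kernel `k_β`;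
since the averages are normalized, the exchange needs nothing more than the integrability of
`‖x - z‖ ^ (-(n + 2s))` away from `x`. The weights are finite only off `∂Ω`, a null set because a
point touched by a ball from outside is not a point of density. The principal value over `Ω` exists
because the linear part of `u` at `x` is odd and integrates to zero over annuli centred at `x`,
while the remainder is Hölder small.
-/

open Module (finrank)
open scoped ENNReal NNReal Topology

section KernelIntegrability

variable {E : Type*} [NormedAddCommGroup E] [NormedSpace ℝ E] [FiniteDimensional ℝ E]
  [MeasurableSpace E] [BorelSpace E] {μ : Measure E} [μ.IsAddHaarMeasure] {p : ℝ} {x : E}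

theorem integrableOn_norm_sub_rpow_neg_of_notMem_closure {S : Set E} (hp : finrank ℝ E < p)
    (hx : x ∉ closure S) : IntegrableOn (fun y => ‖x - y‖ ^ (-p)) S μ := by
  obtain ⟨ε, hε, hball⟩ := Metric.isOpen_iff.1 isClosed_closure.isOpen_compl x hx
  have hS : S ⊆ (ball x ε)ᶜ := fun y hy hyε => hball hyε (subset_closure hy)
  have hJapanese : Integrable (fun y : E => (ε / (1 + ε)) ^ (-p) * (1 + ‖x - y‖) ^ (-p)) μ :=
    ((integrable_one_add_norm hp).comp_sub_left x).const_mul _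
  refine IntegrableOn.mono_set (hJapanese.integrableOn.mono'
    (Measurable.aestronglyMeasurable (by fun_prop)) ?_) hS
  refine ae_restrict_of_forall_mem measurableSet_ball.compl fun y hy => ?_
  have hxy : ε ≤ ‖x - y‖ := by simpa [dist_eq_norm, norm_sub_rev] using hy
  rw [Real.norm_of_nonneg (by positivity), ← Real.mul_rpow (by positivity) (by positivity)]
  refine Real.rpow_le_rpow_of_nonpos (by positivity) ?_
    (neg_nonpos.2 ((Nat.cast_nonneg _).trans hp.le))
  rw [div_mul_eq_mul_div, div_le_iff₀ (by positivity)]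
  linarith

theorem integrableOn_norm_sub_rpow_ball {q : ℝ} (hq : -(finrank ℝ E : ℝ) < q) (x : E) (r : ℝ) :
    IntegrableOn (fun y => ‖x - y‖ ^ q) (ball x r) μ := by
  rcases subsingleton_or_nontrivial E with hE | hE
  · have hconst : (fun y => ‖x - y‖ ^ q) = fun _ => 0 ^ q :=
      funext fun y => by rw [Subsingleton.elim x y, sub_self, norm_zero]
    rw [hconst]
    exact integrableOn_const measure_ball_lt_top.ne
  have hcentred : IntegrableOn (fun y : E => ‖y‖ ^ q) (ball 0 r) μ := by
    rw [integrableOn_fun_norm_addHaar μ (f := fun t => t ^ q)]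
    rcases le_or_gt r 0 with hr | hr
    · simp [Ioo_eq_empty_of_le hr]
    have hradial : IntegrableOn (fun t : ℝ => t ^ (q + finrank ℝ E - 1)) (Ioo 0 r) :=
      (intervalIntegral.integrableOn_Ioo_rpow_iff hr).2 (by linarith)
    refine hradial.congr_fun (fun t ht => ?_) measurableSet_Ioo
    simp only [smul_eq_mul]
    rw [← Real.rpow_natCast, ← Real.rpow_add ht.1, Nat.cast_pred Module.finrank_pos]
    ring_nf
  have htranslate : (fun y => x - y) ⁻¹' ball 0 r = ball x r := by
    ext y
    simp [dist_eq_norm, norm_sub_rev]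
  rw [← htranslate]
  exact ((Measure.measurePreserving_sub_left μ x).integrableOn_comp_preimage
    (MeasurableEquiv.subLeft x).measurableEmbedding).2 hcentred

theorem integrableOn_mul_norm_sub_rpow_neg_ball {f : E → ℝ} {C : ℝ≥0} {γ r : ℝ}
    (hf : AEStronglyMeasurable f μ) (hpγ : p < γ + finrank ℝ E)
    (hfγ : ∀ y ∈ ball x r, |f y| ≤ C * ‖x - y‖ ^ γ) :
    IntegrableOn (fun y => f y * ‖x - y‖ ^ (-p)) (ball x r) μ := by
  have hbound : IntegrableOn (fun y => C * ‖x - y‖ ^ (γ - p)) (ball x r) μ :=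
    (integrableOn_norm_sub_rpow_ball (by linarith) x r).const_mul _
  refine hbound.mono' (hf.restrict.mul (Measurable.aestronglyMeasurable (by fun_prop))) ?_
  refine ae_restrict_of_forall_mem measurableSet_ball fun y hy => ?_
  calc ‖f y * ‖x - y‖ ^ (-p)‖ = |f y| * ‖x - y‖ ^ (-p) := by
        rw [norm_mul, Real.norm_eq_abs, Real.norm_of_nonneg (by positivity)]
    _ ≤ C * ‖x - y‖ ^ γ * ‖x - y‖ ^ (-p) := by gcongr; exact hfγ y hy
    _ = C * (‖x - y‖ ^ γ * ‖x - y‖ ^ (-p)) := mul_assoc _ _ _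
    _ ≤ C * ‖x - y‖ ^ (γ - p) := by
        gcongr
        exact Real.le_rpow_add (norm_nonneg _) _ _

theorem setIntegral_norm_sub_rpow_neg_pos {Ω : Set E} (hΩo : IsOpen Ω) (hΩne : Ω.Nonempty)
    (hp : finrank ℝ E < p) (hx : x ∉ closure Ω) : 0 < ∫ y in Ω, ‖x - y‖ ^ (-p) ∂μ := by
  rw [setIntegral_pos_iff_support_of_nonneg_ae (Eventually.of_forall fun y => by positivity)
    (integrableOn_norm_sub_rpow_neg_of_notMem_closure hp hx)]
  refine (hΩo.measure_pos μ hΩne).trans_le (measure_mono fun y hy => ⟨?_, hy⟩)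
  have hxy : x ≠ y := fun h => hx (h ▸ subset_closure hy)
  exact (Real.rpow_pos_of_pos (norm_sub_pos_iff.2 hxy) _).ne'

end KernelIntegrability

section PrincipalValue

theorem tendsto_setIntegral_diff_ball {X F : Type*} [MetricSpace X] [MeasurableSpace X]
    [OpensMeasurableSpace X] {μ : Measure X} [NormedAddCommGroup F] [NormedSpace ℝ F]
    {f : X → F} {S : Set X} (hf : IntegrableOn f S μ) (x : X) :
    Tendsto (fun ε : ℝ => ∫ y in S \ ball x ε, f y ∂μ) (𝓝[>] 0) (𝓝 (∫ y in S \ {x}, f y ∂μ)) := by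
  have hcover : AECover (μ.restrict (S \ {x})) (𝓝[>] (0 : ℝ)) fun ε => (ball x ε)ᶜ :=
    { ae_eventually_mem := by
        have hne : ∀ᵐ y ∂μ.restrict (S \ {x}), y ∈ ({x} : Set X)ᶜ :=
          ae_mono (Measure.restrict_mono_set μ fun y hy => hy.2)
            (ae_restrict_mem (measurableSet_singleton x).compl)
        filter_upwards [hne] with y hy
        filter_upwards [Ioo_mem_nhdsGT (dist_pos.2 hy)] with ε hε
        simpa using hε.2.le
      measurableSet := fun ε => measurableSet_ball.compl }
  refine (hcover.integral_tendsto_of_countably_generated (hf.mono_set sdiff_subset)).congr' ?_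
  filter_upwards [self_mem_nhdsWithin] with ε hε
  have hset : (ball x ε)ᶜ ∩ (S \ {x}) = S \ ball x ε := by
    ext y
    have hxy : y = x → y ∈ ball x ε := fun h => h ▸ mem_ball_self hε
    simp only [mem_inter_iff, mem_compl_iff, Set.mem_sdiff, mem_singleton_iff]
    tauto
  rw [Measure.restrict_restrict measurableSet_ball.compl, hset]

theorem tendsto_setIntegral_compl_ball {X F : Type*} [PseudoMetricSpace X] [MeasurableSpace X]
    [OpensMeasurableSpace X] {μ : Measure X} [NormedAddCommGroup F] [NormedSpace ℝ F]
    {f : X → F} {Ω : Set X} {x : X} {L : F} (hΩo : IsOpen Ω) (hx : x ∈ Ω)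
    (hf : ∀ ε > 0, IntegrableOn f (ball x ε)ᶜ μ)
    (hL : Tendsto (fun ε : ℝ => ∫ y in Ω \ ball x ε, f y ∂μ) (𝓝[>] 0) (𝓝 L)) :
    Tendsto (fun ε : ℝ => ∫ y in (ball x ε)ᶜ, f y ∂μ) (𝓝[>] 0)
      (𝓝 (L + ∫ y in Ωᶜ, f y ∂μ)) := by
  obtain ⟨r, hr, hrΩ⟩ := Metric.isOpen_iff.1 hΩo x hx
  refine (hL.add_const (∫ y in Ωᶜ, f y ∂μ)).congr' ?_
  filter_upwards [Ioo_mem_nhdsGT hr] with ε hε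
  have hεΩ : ball x ε ⊆ Ω := (ball_subset_ball hε.2.le).trans hrΩ
  have hinside : (ball x ε)ᶜ ∩ Ω = Ω \ ball x ε := by rw [inter_comm, sdiff_eq]
  have houtside : (ball x ε)ᶜ \ Ω = Ωᶜ := by
    rw [sdiff_eq, inter_eq_right.2 (compl_subset_compl.2 hεΩ)]
  rw [← integral_inter_add_sdiff hΩo.measurableSet (hf ε hε.1), hinside, houtside]

theorem setIntegral_eq_zero_of_odd {G F : Type*} [AddCommGroup G] [MeasurableSpace G]
    [MeasurableAdd G] [MeasurableNeg G] {μ : Measure G} [μ.IsAddLeftInvariant]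
    [μ.IsNegInvariant] [NormedAddCommGroup F] [NormedSpace ℝ F] {f : G → F} {S : Set G} {x : G}
    (hS : MeasurableSet S) (hSx : ∀ v, x - v ∈ S ↔ x + v ∈ S)
    (hf : ∀ v, f (x - v) = -f (x + v)) : ∫ y in S, f y ∂μ = 0 := by
  have hodd (v : G) : S.indicator f (x - v) = -S.indicator f (x + v) := by
    by_cases hv : x + v ∈ S <;> simp [hSx, hv, hf]
  rw [← integral_indicator hS]
  have : IsAddTorsionFree F := .of_isTorsionFree ℝ F
  refine self_eq_neg.1 ?_
  calc ∫ y, S.indicator f y ∂μ = ∫ v, S.indicator f (x - v) ∂μ :=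
        (integral_sub_left_eq_self _ μ x).symm
    _ = -∫ v, S.indicator f (x + v) ∂μ := by simp only [hodd, integral_neg]
    _ = -∫ y, S.indicator f y ∂μ := by rw [integral_add_left_eq_self]

variable {E : Type*} [NormedAddCommGroup E] [NormedSpace ℝ E] [FiniteDimensional ℝ E]
  [MeasurableSpace E] [BorelSpace E] {μ : Measure E} [μ.IsAddHaarMeasure]

theorem setIntegral_annulus_clm_mul_norm_rpow (l : E →L[ℝ] ℝ) (x : E) (p r ε : ℝ) :
    ∫ y in ball x r \ ball x ε, l (y - x) * ‖x - y‖ ^ p ∂μ = 0 :=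
  setIntegral_eq_zero_of_odd (x := x) (measurableSet_ball.diff measurableSet_ball)
    (fun v => by simp [dist_eq_norm]) (fun v => by simp)

theorem integrableOn_sub_mul_norm_rpow_neg {u : E → ℝ} {p : ℝ} {x : E} {S : Set E}
    (hu : MemLp u ∞ μ) (hp : finrank ℝ E < p) (a : ℝ) (hx : x ∉ closure S) :
    IntegrableOn (fun y => (a - u y) * ‖x - y‖ ^ (-p)) S μ :=
  (integrableOn_norm_sub_rpow_neg_of_notMem_closure hp hx).mul_of_top_right
    ((memLp_top_const a).sub (hu.restrict S))

theorem notMem_closure_compl_ball {X : Type*} [PseudoMetricSpace X] (x : X) {ε : ℝ} (hε : 0 < ε) :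
    x ∉ closure (ball x ε)ᶜ := by
  simpa [isOpen_ball.isClosed_compl.closure_eq] using hε

theorem exists_tendsto_setIntegral_diff_ball {Ω : Set E} {u : E → ℝ} {l : E →L[ℝ] ℝ} {C : ℝ≥0}
    {p γ r : ℝ} {x : E} (hu : MemLp u ∞ μ) (hp : finrank ℝ E < p) (hpγ : p < γ + finrank ℝ E)
    (hr : 0 < r) (hrΩ : ball x r ⊆ Ω)
    (hul : ∀ y ∈ ball x r, |u y - u x - l (y - x)| ≤ C * ‖x - y‖ ^ γ) :
    ∃ L, Tendsto (fun ε : ℝ => ∫ y in Ω \ ball x ε, (u x - u y) * ‖x - y‖ ^ (-p) ∂μ)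
      (𝓝[>] 0) (𝓝 L) := by
  set f : E → ℝ := fun y => (u x - u y) * ‖x - y‖ ^ (-p)
  set g : E → ℝ := fun y => (u y - u x - l (y - x)) * ‖x - y‖ ^ (-p)
  have hf {ε : ℝ} (hε : 0 < ε) : IntegrableOn f (ball x ε)ᶜ μ :=
    integrableOn_sub_mul_norm_rpow_neg hu hp (u x) (notMem_closure_compl_ball x hε)
  have hum := hu.aestronglyMeasurable
  have hg : IntegrableOn g (ball x r) μ :=
    integrableOn_mul_norm_sub_rpow_neg_ball (by fun_prop) hpγ hul
  have hannulus {ε : ℝ} (hε : 0 < ε) :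
      ∫ y in ball x r \ ball x ε, f y ∂μ = -∫ y in ball x r \ ball x ε, g y ∂μ := by
    have hlinear := setIntegral_annulus_clm_mul_norm_rpow (μ := μ) l x (-p) r ε
    have hsplit (y : E) : l (y - x) * ‖x - y‖ ^ (-p) = -(f y + g y) := by
      simp only [f, g]
      ring
    simp only [hsplit] at hlinear
    rw [integral_neg, integral_add ((hf hε).mono_set fun y hy => hy.2)
      (hg.mono_set sdiff_subset)] at hlinear
    linarith
  refine ⟨∫ y in Ω \ ball x r, f y ∂μ - ∫ y in ball x r \ {x}, g y ∂μ,
    ((tendsto_setIntegral_diff_ball hg x).const_sub _).congr' ?_⟩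
  filter_upwards [Ioo_mem_nhdsGT hr] with ε hε
  have hεr : ball x ε ⊆ ball x r := ball_subset_ball hε.2.le
  have hnear : (Ω \ ball x ε) ∩ ball x r = ball x r \ ball x ε := by
    rw [sdiff_inter_right_comm, inter_eq_right.2 hrΩ]
  have hfar : (Ω \ ball x ε) \ ball x r = Ω \ ball x r := by
    rw [sdiff_sdiff, union_eq_right.2 hεr]
  have hsplit := integral_inter_add_sdiff (measurableSet_ball (x := x) (ε := r))
    ((hf hε.1).mono_set fun y (hy : y ∈ Ω \ ball x ε) => hy.2)
  rw [hnear, hfar, hannulus hε.1] at hsplit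
  linarith

end PrincipalValue

section NonlocalAverage

variable {Y Z : Type*} [MeasurableSpace Y] {ν : Measure Y} {K : Z → Y → ℝ} {w : Y → ℝ}

/-- The average of `w` with respect to the measure `K z y dν(y)`, normalized to total mass one.
With `K z y = |z - y|^(-(n + 2s))` and `ν` the Lebesgue measure on `Ω`, the normal derivative
`Ñ_s u(z)` is the average of `y ↦ u z - u y`. It is `0` where the total mass is `0` or infinite. -/
noncomputable def kernelAverage (ν : Measure Y) (K : Z → Y → ℝ) (w : Y → ℝ) (z : Z) : ℝ :=
  (∫ y, K z y ∂ν)⁻¹ * ∫ y, w y * K z y ∂ν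

theorem kernelAverage_const_sub {z : Z} (hK : Integrable (K z) ν) (hK0 : ∫ y, K z y ∂ν ≠ 0)
    (hw : Integrable (fun y => w y * K z y) ν) (a : ℝ) :
    kernelAverage ν K (fun y => a - w y) z = a - kernelAverage ν K w z := by
  simp only [kernelAverage, sub_mul]
  rw [integral_sub (hK.const_mul a) hw, integral_const_mul]
  field_simp

theorem kernelAverage_const_sub_eq_of_robin {z : Z} {a b t : ℝ} (hK : Integrable (K z) ν)
    (hK0 : ∫ y, K z y ∂ν ≠ 0) (hw : Integrable (fun y => w y * K z y) ν)
    (hRobin : b * t + (1 - b) * kernelAverage ν K (fun y => t - w y) z = 0) :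
    a - t = a * b + (1 - b) * kernelAverage ν K (fun y => a - w y) z := by
  rw [kernelAverage_const_sub hK hK0 hw] at hRobin ⊢
  linarith

theorem integral_mul_normalized_kernel_mul (ρ : Z → ℝ) (z : Z) :
    ∫ y, w y * (ρ z * (∫ y', K z y' ∂ν)⁻¹ * K z y) ∂ν = ρ z * kernelAverage ν K w z := by
  rw [kernelAverage, ← mul_assoc, ← integral_const_mul]
  congr with y
  ring

variable [MeasurableSpace Z] {μ : Measure Z} {ρ : Z → ℝ} [SFinite ν]

theorem integrable_prod_mul_normalized_kernel (hKm : Measurable (Function.uncurry K))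
    (hK0 : ∀ z y, 0 ≤ K z y) (hK : ∀ᵐ z ∂μ, Integrable (K z) ν) (hρ : Integrable ρ μ) :
    Integrable (fun q : Z × Y => ρ q.1 * (∫ y, K q.1 y ∂ν)⁻¹ * K q.1 q.2) (μ.prod ν) := by
  have hmass : Measurable fun z => ∫ y, K z y ∂ν :=
    hKm.stronglyMeasurable.integral_prod_right'.measurable
  have hmeas : AEStronglyMeasurable
      (fun q : Z × Y => ρ q.1 * (∫ y, K q.1 y ∂ν)⁻¹ * K q.1 q.2) (μ.prod ν) :=
    (hρ.1.mul hmass.inv.aestronglyMeasurable).comp_fst.mul hKm.aestronglyMeasurable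
  refine (integrable_prod_iff hmeas).2 ⟨?_, ?_⟩
  · filter_upwards [hK] with z hz using hz.const_mul _
  · refine hρ.mono hmeas.norm.integral_prod_right' (Eventually.of_forall fun z => ?_)
    have hmass0 : 0 ≤ ∫ y, K z y ∂ν := integral_nonneg (hK0 z)
    simp only [norm_mul, norm_inv, Real.norm_of_nonneg (hK0 z _)]
    rw [integral_const_mul, Real.norm_of_nonneg hmass0, Real.norm_of_nonneg (by positivity),
      mul_assoc]
    exact mul_le_of_le_one_right (norm_nonneg _) (inv_mul_le_one)

theorem integrable_prod_mul_normalized_kernel_mul (hKm : Measurable (Function.uncurry K))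
    (hK0 : ∀ z y, 0 ≤ K z y) (hK : ∀ᵐ z ∂μ, Integrable (K z) ν) (hρ : Integrable ρ μ)
    (hw : MemLp w ∞ ν) :
    Integrable (fun q : Z × Y => w q.2 * (ρ q.1 * (∫ y, K q.1 y ∂ν)⁻¹ * K q.1 q.2))
      (μ.prod ν) :=
  (integrable_prod_mul_normalized_kernel hKm hK0 hK hρ).bdd_mul hw.1.comp_snd
    (Measure.quasiMeasurePreserving_snd.ae (ae_le_lpNorm_exponent_top hw))

theorem integrable_mul_kernelAverage (hKm : Measurable (Function.uncurry K))
    (hK0 : ∀ z y, 0 ≤ K z y) (hK : ∀ᵐ z ∂μ, Integrable (K z) ν) (hρ : Integrable ρ μ)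
    (hw : MemLp w ∞ ν) : Integrable (fun z => ρ z * kernelAverage ν K w z) μ := by
  simpa only [integral_mul_normalized_kernel_mul] using
    (integrable_prod_mul_normalized_kernel_mul hKm hK0 hK hρ hw).integral_prod_left

theorem integral_mul_kernelAverage [SFinite μ] (hKm : Measurable (Function.uncurry K))
    (hK0 : ∀ z y, 0 ≤ K z y) (hK : ∀ᵐ z ∂μ, Integrable (K z) ν) (hρ : Integrable ρ μ)
    (hw : MemLp w ∞ ν) :
    ∫ z, ρ z * kernelAverage ν K w z ∂μ =
      ∫ y, w y * ∫ z, ρ z * (∫ y', K z y' ∂ν)⁻¹ * K z y ∂μ ∂ν := by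
  simp only [← integral_mul_normalized_kernel_mul, ← integral_const_mul]
  exact integral_integral_swap (integrable_prod_mul_normalized_kernel_mul hKm hK0 hK hρ hw)

end NonlocalAverage

section RobinCondition

theorem ae_restrict_compl_notMem_closure {X : Type*} [TopologicalSpace X] [MeasurableSpace X]
    [OpensMeasurableSpace X] {μ : Measure X} {Ω : Set X} (hΩo : IsOpen Ω)
    (hΩfr : μ (frontier Ω) = 0) : ∀ᵐ z ∂μ.restrict Ωᶜ, z ∉ closure Ω := by
  filter_upwards [ae_restrict_mem hΩo.measurableSet.compl,
    ae_restrict_of_ae (measure_eq_zero_iff_ae_notMem.1 hΩfr)] with z hzΩ hzfr hzcl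
  exact hzfr (hΩo.frontier_eq ▸ ⟨hzcl, hzΩ⟩)

variable {E : Type*} [NormedAddCommGroup E] [NormedSpace ℝ E] [FiniteDimensional ℝ E]
  [MeasurableSpace E] [BorelSpace E] {μ : Measure E} [μ.IsAddHaarMeasure]

theorem setIntegral_compl_eq_of_robin {Ω : Set E} {u β : E → ℝ} {p : ℝ} {x : E}
    (hΩo : IsOpen Ω) (hΩfr : μ (frontier Ω) = 0) (hp : finrank ℝ E < p)
    (hu : MemLp u ∞ μ) (hβ : MemLp β ∞ μ) (hx : x ∈ Ω)
    (hRobin : ∀ᵐ z ∂μ.restrict Ωᶜ, β z * u z + (1 - β z) *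
      kernelAverage (μ.restrict Ω) (fun z y => ‖z - y‖ ^ (-p)) (fun y => u z - u y) z = 0) :
    ∫ z in Ωᶜ, (u x - u z) * ‖x - z‖ ^ (-p) ∂μ =
      u x * ∫ z in Ωᶜ, β z * ‖x - z‖ ^ (-p) ∂μ +
        ∫ y in Ω, (u x - u y) * ∫ z in Ωᶜ, (1 - β z) * ‖x - z‖ ^ (-p) *
          (∫ w in Ω, ‖z - w‖ ^ (-p) ∂μ)⁻¹ * ‖z - y‖ ^ (-p) ∂μ ∂μ := by
  set K : E → E → ℝ := fun z y => ‖z - y‖ ^ (-p)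
  have hxΩ : x ∉ closure Ωᶜ := by simpa [hΩo.isClosed_compl.closure_eq] using hx
  have hKm : Measurable (Function.uncurry K) := by
    simp only [K, Function.uncurry_def]
    fun_prop
  have hK0 (z y : E) : 0 ≤ K z y := Real.rpow_nonneg (norm_nonneg _) _
  have hext := ae_restrict_compl_notMem_closure hΩo hΩfr
  have hK : ∀ᵐ z ∂μ.restrict Ωᶜ, Integrable (K z) (μ.restrict Ω) := by
    filter_upwards [hext] with z hz
    exact integrableOn_norm_sub_rpow_neg_of_notMem_closure hp hz
  have hKx : IntegrableOn (K x) Ωᶜ μ := integrableOn_norm_sub_rpow_neg_of_notMem_closure hp hxΩ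
  have hβK : IntegrableOn (fun z => β z * K x z) Ωᶜ μ := hKx.mul_of_top_right (hβ.restrict _)
  have hρ : IntegrableOn (fun z => (1 - β z) * K x z) Ωᶜ μ :=
    hKx.mul_of_top_right ((memLp_top_const 1).sub (hβ.restrict _))
  have hw : MemLp (fun y => u x - u y) ∞ (μ.restrict Ω) :=
    (memLp_top_const (u x)).sub (hu.restrict _)
  have hpointwise : ∀ᵐ z ∂μ.restrict Ωᶜ, (u x - u z) * K x z = u x * (β z * K x z) +
      (1 - β z) * K x z * kernelAverage (μ.restrict Ω) K (fun y => u x - u y) z := by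
    filter_upwards [hRobin, hext, hK] with z hRz hz hKz
    have hmass := setIntegral_norm_sub_rpow_neg_pos (μ := μ) hΩo ⟨x, hx⟩ hp hz
    rw [kernelAverage_const_sub_eq_of_robin (a := u x) hKz hmass.ne'
      (hKz.mul_of_top_right (hu.restrict _)) hRz]
    ring
  rw [integral_congr_ae hpointwise, integral_add (hβK.const_mul _)
    (integrable_mul_kernelAverage hKm hK0 hK hρ hw), integral_const_mul,
    integral_mul_kernelAverage hKm hK0 hK hρ hw]

end RobinCondition

section NullFrontier

-- A point at which `A` is porous is not a point of density of `A`.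
theorem measure_eq_zero_of_eventually_disjoint_closedBall {X : Type*} [PseudoMetricSpace X]
    [MeasurableSpace X] [SecondCountableTopology X] [BorelSpace X] {μ : Measure X}
    [IsLocallyFiniteMeasure μ] [IsUnifLocDoublingMeasure μ] {A : Set X} (hA : MeasurableSet A)
    (K : ℝ) (hporous : ∀ p ∈ A, ∃ c : ℝ → X, ∀ᶠ δ in 𝓝[>] 0,
      p ∈ closedBall (c δ) (K * δ) ∧ Disjoint A (closedBall (c δ) δ)) : μ A = 0 := by
  have hdensity := IsUnifLocDoublingMeasure.ae_tendsto_measure_inter_div μ A K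
  rw [ae_restrict_iff' hA] at hdensity
  refine measure_eq_zero_iff_ae_notMem.2 ?_
  filter_upwards [hdensity] with p hp hpA
  obtain ⟨c, hc⟩ := hporous p hpA
  have hone := hp hpA c id tendsto_id (hc.mono fun δ hδ => hδ.1)
  have hzero : Tendsto (fun δ => μ (A ∩ closedBall (c δ) δ) / μ (closedBall (c δ) δ))
      (𝓝[>] 0) (𝓝 0) := by
    refine tendsto_const_nhds.congr' ?_
    filter_upwards [hc] with δ hδ
    rw [hδ.2.inter_eq, measure_empty, ENNReal.zero_div]
  exact zero_ne_one (tendsto_nhds_unique hzero hone)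

theorem addHaar_eq_zero_of_forall_exists_disjoint_ball {E : Type*} [NormedAddCommGroup E]
    [NormedSpace ℝ E] [FiniteDimensional ℝ E] [MeasurableSpace E] [BorelSpace E]
    {μ : Measure E} [μ.IsAddHaarMeasure] {A : Set E} (hA : MeasurableSet A)
    (hball : ∀ p ∈ A, ∃ y ≠ p, Disjoint A (ball y (dist p y))) : μ A = 0 := by
  refine measure_eq_zero_of_eventually_disjoint_closedBall hA 2 fun p hp => ?_
  obtain ⟨y, hyp, hdisj⟩ := hball p hp
  have hpy : 0 < dist p y := dist_pos.2 hyp.symm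
  refine ⟨fun δ => AffineMap.lineMap p y (2 * δ / dist p y), ?_⟩
  filter_upwards [Ioo_mem_nhdsGT (half_pos hpy)] with δ ⟨hδ, hδy⟩
  have ht0 : 0 ≤ 2 * δ / dist p y := by positivity
  have ht1 : 0 ≤ 1 - 2 * δ / dist p y := by
    rw [sub_nonneg, div_le_one hpy]
    linarith
  refine ⟨?_, hdisj.mono_right (closedBall_subset_ball' ?_)⟩
  · rw [mem_closedBall, dist_left_lineMap, Real.norm_of_nonneg ht0, div_mul_cancel₀ _ hpy.ne']
  · rw [dist_lineMap_right, Real.norm_of_nonneg ht1, sub_mul, div_mul_cancel₀ _ hpy.ne']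
    linarith

theorem HasC11Boundary.volume_frontier_eq_zero {n : ℕ} {Ω : Set (EuclideanSpace ℝ (Fin n))}
    (hΩ : HasC11Boundary Ω) : volume (frontier Ω) = 0 := by
  obtain ⟨r, hr, hballs⟩ := hΩ
  have hmeas : MeasurableSet (frontier Ω) := isClosed_frontier.measurableSet
  refine addHaar_eq_zero_of_forall_exists_disjoint_ball hmeas fun p hp => ?_
  obtain ⟨y, -, hyΩ, rfl⟩ := (hballs p hp).2
  have hdisj : Disjoint Ω (ball y (dist p y)) :=
    (subset_compl_iff_disjoint_left.1 (ball_subset_closedBall.trans hyΩ))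
  exact ⟨y, (dist_pos.1 hr).symm,
    (hdisj.closure_left isOpen_ball).mono_left frontier_subset_closure⟩

end NullFrontier

section HolderRegularity

theorem norm_sub_sub_le_of_holderOnWith_fderiv {E F : Type*} [NormedAddCommGroup E]
    [NormedSpace ℝ E] [NormedAddCommGroup F] [NormedSpace ℝ F] {f : E → F} {f' : E → E →L[ℝ] F}
    {x y : E} {r : ℝ} {C q : ℝ≥0} (hf : ∀ z ∈ ball x r, HasFDerivAt f (f' z) z)
    (hf' : HolderOnWith C q f' (ball x r)) (hy : y ∈ ball x r) :
    ‖f y - f x - f' x (y - x)‖ ≤ C * ‖x - y‖ ^ (q + 1 : ℝ) := by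
  have hsub : closedBall x (dist y x) ⊆ ball x r := closedBall_subset_ball hy
  have hx : x ∈ closedBall x (dist y x) := mem_closedBall_self dist_nonneg
  have hderiv : ∀ z ∈ closedBall x (dist y x), ‖f' z - f' x‖ ≤ C * dist y x ^ (q : ℝ) := by
    intro z hz
    rw [← dist_eq_norm]
    refine (hf'.dist_le (hsub hz) (hsub hx)).trans ?_
    gcongr
    exact hz
  have hmean := (convex_closedBall x (dist y x)).norm_image_sub_le_of_norm_hasFDerivWithin_le'
    (fun z hz => (hf z (hsub hz)).hasFDerivWithinAt) hderiv hx (mem_closedBall.2 le_rfl)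
  rwa [dist_eq_norm, norm_sub_rev y x, mul_assoc,
    ← Real.rpow_add_one' (norm_nonneg _) (by positivity)] at hmean

theorem HolderLoc.exists_abs_sub_sub_le {n : ℕ} {γ : ℝ} {Ω : Set (EuclideanSpace ℝ (Fin n))}
    {u : EuclideanSpace ℝ (Fin n) → ℝ} {x : EuclideanSpace ℝ (Fin n)} (hu : HolderLoc γ Ω u)
    (hγ : 0 ≤ γ) (hx : x ∈ Ω) :
    ∃ r > 0, ball x r ⊆ Ω ∧ ∃ (C : ℝ≥0) (l : EuclideanSpace ℝ (Fin n) →L[ℝ] ℝ),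
      ∀ y ∈ ball x r, |u y - u x - l (y - x)| ≤ C * ‖x - y‖ ^ γ := by
  obtain ⟨r, hr, hrΩ, hle, hgt⟩ := hu x hx
  refine ⟨r, hr, hrΩ, ?_⟩
  rcases le_or_gt γ 1 with hγ1 | hγ1
  · obtain ⟨C, hC⟩ := hle hγ1
    refine ⟨C, 0, fun y hy => ?_⟩
    have hdist := hC.dist_le hy (mem_ball_self hr)
    rw [Real.dist_eq, dist_eq_norm, norm_sub_rev y x, Real.coe_toNNReal γ hγ] at hdist
    simpa using hdist
  · obtain ⟨C, du, hdu, hC⟩ := hgt hγ1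
    refine ⟨C, du x, fun y hy => ?_⟩
    simpa [Real.coe_toNNReal (γ - 1) (by linarith)] using
      norm_sub_sub_le_of_holderOnWith_fderiv hdu hC hy

end HolderRegularity

section FractionalLaplacian

variable {n : ℕ} {Ω : Set (EuclideanSpace ℝ (Fin n))} {s : ℝ}
  {u β : EuclideanSpace ℝ (Fin n) → ℝ} {x : EuclideanSpace ℝ (Fin n)}

theorem NNder_eq_kernelAverage (s : ℝ) (Ω : Set (EuclideanSpace ℝ (Fin n)))
    (u : EuclideanSpace ℝ (Fin n) → ℝ) (z : EuclideanSpace ℝ (Fin n)) :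
    NNder s Ω u z = kernelAverage (volume.restrict Ω)
      (fun z y => ‖z - y‖ ^ (-((n : ℝ) + 2 * s))) (fun y => u z - u y) z :=
  rfl

theorem kBeta_eq_setIntegral_rpow_neg (s : ℝ) (Ω : Set (EuclideanSpace ℝ (Fin n)))
    (β : EuclideanSpace ℝ (Fin n) → ℝ) (x y : EuclideanSpace ℝ (Fin n)) :
    kBeta s Ω β x y = ∫ z in Ωᶜ, (1 - β z) * ‖x - z‖ ^ (-((n : ℝ) + 2 * s)) *
      (∫ w in Ω, ‖z - w‖ ^ (-((n : ℝ) + 2 * s)))⁻¹ * ‖z - y‖ ^ (-((n : ℝ) + 2 * s)) := by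
  rw [kBeta]
  congr with z
  rw [Real.rpow_neg (norm_nonneg (x - z)), Real.rpow_neg (norm_nonneg (z - y)), norm_sub_rev z y,
    div_eq_mul_inv, mul_inv, mul_inv]
  ring

theorem integral_sub_mul_eq_neg_setIntegral_compl {X : Type*} [MeasurableSpace X] {μ : Measure X}
    {Ω : Set X} {b k : X → ℝ} {x : X} (hΩ : MeasurableSet Ω) (hb : ∀ z ∈ Ω, b z = 0)
    (hx : x ∈ Ω) : ∫ y, (b x - b y) * k y ∂μ = -∫ y in Ωᶜ, b y * k y ∂μ := by
  rw [← integral_neg, ← integral_indicator hΩ.compl]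
  congr with y
  by_cases hy : y ∈ Ω <;> simp [hy, hb, hx]

theorem setIntegral_compl_eq_of_NNder_robin (hs : 0 < s) (hΩo : IsOpen Ω)
    (hΩfr : volume (frontier Ω) = 0) (hu : MemLp u ∞) (hβ : MemLp β ∞)
    (hβΩ : ∀ z ∈ Ω, β z = 0)
    (hRobin : ∀ᵐ z, z ∈ Ωᶜ → β z * u z + (1 - β z) * NNder s Ω u z = 0) (hx : x ∈ Ω) :
    ∫ z in Ωᶜ, (u x - u z) * ‖x - z‖ ^ (-((n : ℝ) + 2 * s)) =
      -(u x * ∫ y, (β x - β y) * ‖x - y‖ ^ (-((n : ℝ) + 2 * s))) +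
        ∫ y in Ω, (u x - u y) * kBeta s Ω β x y := by
  simp only [NNder_eq_kernelAverage] at hRobin
  simp only [kBeta_eq_setIntegral_rpow_neg]
  rw [integral_sub_mul_eq_neg_setIntegral_compl hΩo.measurableSet hβΩ hx, mul_neg, neg_neg]
  exact setIntegral_compl_eq_of_robin hΩo hΩfr (by simpa using hs) hu hβ hx
    ((ae_restrict_iff' hΩo.measurableSet.compl).2 hRobin)

end FractionalLaplacian

theorem stmt12_general {n : ℕ} {Ω : Set (EuclideanSpace ℝ (Fin n))} (hΩo : IsOpen Ω)
    (hΩfr : volume (frontier Ω) = 0) {s : ℝ} (hs : 0 < s) {α : ℝ} (hα : 0 < α) (c : ℝ)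
    {u : EuclideanSpace ℝ (Fin n) → ℝ} (hu : MemLp u ∞) (hureg : HolderLoc (2 * s + α) Ω u)
    {β : EuclideanSpace ℝ (Fin n) → ℝ} (hβ : MemLp β ∞) (hβΩ : ∀ z ∈ Ω, β z = 0)
    (hRobin : ∀ᵐ z, z ∈ Ωᶜ → β z * u z + (1 - β z) * NNder s Ω u z = 0)
    {x : EuclideanSpace ℝ (Fin n)} (hx : x ∈ Ω) :
    ∃ L : ℝ,
      Tendsto (fun ε : ℝ => c * ∫ y in Ω \ ball x ε, (u x - u y) * ‖x - y‖ ^ (-((n : ℝ) + 2 * s)))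
        (𝓝[>] 0) (𝓝 L) ∧
      Tendsto (fun ε : ℝ => c * ∫ y in (ball x ε)ᶜ, (u x - u y) * ‖x - y‖ ^ (-((n : ℝ) + 2 * s)))
        (𝓝[>] 0)
        (𝓝 (L - u x * (c * ∫ y, (β x - β y) * ‖x - y‖ ^ (-((n : ℝ) + 2 * s))) +
          c * ∫ y in Ω, (u x - u y) * kBeta s Ω β x y)) := by
  have hp : finrank ℝ (EuclideanSpace ℝ (Fin n)) < (n : ℝ) + 2 * s := by simpa using hs
  obtain ⟨r, hr, hrΩ, C, l, hul⟩ := hureg.exists_abs_sub_sub_le (by linarith) hx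
  have hpγ : (n : ℝ) + 2 * s < 2 * s + α + finrank ℝ (EuclideanSpace ℝ (Fin n)) := by
    rw [finrank_euclideanSpace_fin]
    linarith
  obtain ⟨L, hL⟩ := exists_tendsto_setIntegral_diff_ball hu hp hpγ hr hrΩ hul
  have hfull := tendsto_setIntegral_compl_ball hΩo hx (fun ε hε =>
    integrableOn_sub_mul_norm_rpow_neg hu hp (u x) (notMem_closure_compl_ball x hε)) hL
  rw [setIntegral_compl_eq_of_NNder_robin hs hΩo hΩfr hu hβ hβΩ hRobin hx] at hfull
  refine ⟨c * L, hL.const_mul c, ?_⟩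
  convert hfull.const_mul c using 2
  ring

/-- Theorem 1.1: if u ∈ C^{2s+α}_loc(Ω) ∩ L^∞ satisfies the nonlocal
Robin condition β u + (1−β) Ñ_s u = 0 a.e. outside Ω (β measurable with values in
[0,1], β = 0 in Ω), then for every x ∈ Ω, interpreting the fractional Laplacian
and the regional fractional Laplacian as principal values,
(−Δ)^s u(x) = (−Δ)^s_Ω u(x) − u(x)·(−Δ)^s β(x) + c_{n,s} ∫_Ω (u(x)−u(y)) k_β(x,y) dy,
where (−Δ)^s β(x) = c_{n,s} ∫ (β(x)−β(y))|x−y|^{−(n+2s)} dy converges absolutely. -/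
theorem stmt12 {n : ℕ} (Ω : Set (EuclideanSpace ℝ (Fin n)))
    (hΩo : IsOpen Ω) (hΩb : Bornology.IsBounded Ω) (hΩc : HasC11Boundary Ω)
    (s : ℝ) (hs : s ∈ Set.Ioo (0:ℝ) 1) (α : ℝ) (hα : 0 < α)
    (c : ℝ) (hc : 0 < c)  -- the normalizing constant c_{n,s}
    (u : EuclideanSpace ℝ (Fin n) → ℝ) (hum : Measurable u)
    (hub : ∃ C : ℝ, ∀ x, |u x| ≤ C)
    (hureg : HolderLoc (2*s + α) Ω u)
    (β : EuclideanSpace ℝ (Fin n) → ℝ) (hβm : Measurable β)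
    (hβ01 : ∀ z, β z ∈ Set.Icc (0:ℝ) 1) (hβΩ : ∀ z ∈ Ω, β z = 0)
    (hRobin : ∀ᵐ x : EuclideanSpace ℝ (Fin n), x ∈ Ωᶜ →
      β x * u x + (1 - β x) * NNder s Ω u x = 0) :
    ∀ x ∈ Ω, ∃ L : ℝ,
      -- the regional fractional Laplacian (−Δ)^s_Ω u(x) exists as a principal value L
      Filter.Tendsto
        (fun ε : ℝ => c * ∫ y in Ω \ Metric.ball x ε,
          (u x - u y) * ‖x - y‖ ^ (-((n : ℝ) + 2*s)))
        (nhdsWithin 0 (Set.Ioi 0)) (nhds L) ∧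
      -- and the full fractional Laplacian (−Δ)^s u(x) exists as a principal value,
      -- equal to L − u(x)·(−Δ)^s β(x) + c ∫_Ω (u(x)−u(y)) k_β(x,y) dy
      Filter.Tendsto
        (fun ε : ℝ => c * ∫ y in (Metric.ball x ε)ᶜ,
          (u x - u y) * ‖x - y‖ ^ (-((n : ℝ) + 2*s)))
        (nhdsWithin 0 (Set.Ioi 0))
        (nhds (L - u x * (c * ∫ y, (β x - β y) * ‖x - y‖ ^ (-((n : ℝ) + 2*s)))
          + c * ∫ y in Ω, (u x - u y) * kBeta s Ω β x y)) := by
  intro x hx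
  obtain ⟨C, hC⟩ := hub
  exact stmt12_general hΩo hΩc.volume_frontier_eq_zero hs.1 hα c
    (memLp_top_of_bound hum.aestronglyMeasurable C (.of_forall hC)) hureg
    (memLp_top_of_bound hβm.aestronglyMeasurable 1
      (.of_forall fun z => abs_le.2 ⟨by linarith [(hβ01 z).1], (hβ01 z).2⟩)) hβΩ hRobin hx
end
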